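/- arXiv:1711.04008 — 5 statements merged into one kernel-verified Lean document; each statement's English description precedes it below -/
import Mathlib

section
/- Let k be a field complete with respect to a non-archimedean absolute value, let V and W be normed k-vector spaces, and equip V ⊗_k W with the tensor norm ‖t‖_{V⊗W} = inf max_{1≤i≤N} ‖vᵢ‖_V·‖wᵢ‖_W, the infimum ranging over all representations t = Σ_{i=1}^N vᵢ ⊗ wᵢ. Let α > 1 and let v₁, …, vₙ be a linearly independent α-cartesian family in V. Then for all w₁, …, wₙ ∈ W, setting t = Σ_{i=1}^n vᵢ ⊗ wᵢ, one has α⁻¹ · max_{1≤i≤n} ‖vᵢ‖_V·‖wᵢ‖_W ≤ ‖t‖_{V⊗W} ≤ max_{1≤i≤n} ‖vᵢ‖_V·‖wᵢ‖_W. -/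
theorem IsNonarchimedean.norm_sum_le_of_forall_le {E ι : Type*} [NormedAddCommGroup E]
    (hE : IsNonarchimedean (norm : E → ℝ)) {s : Finset ι} {f : ι → E} {C : ℝ} (hC : 0 ≤ C)
    (hf : ∀ i ∈ s, ‖f i‖ ≤ C) : ‖∑ i ∈ s, f i‖ ≤ C :=
  Finset.sum_induction f (fun x => ‖x‖ ≤ C) (fun x y hx hy => (hE x y).trans (max_le hx hy))
    (by simpa using hC) hf

/-- A subspace on which finitely many coordinate functionals are bounded is closed. -/
theorem Submodule.isClosed_of_coord_bound {k W ι : Type*} [NormedField k] [CompleteSpace k]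
    [NormedAddCommGroup W] [NormedSpace k W] [Fintype ι] {S : Submodule k W} {β : ℝ}
    {e : ι → W} {φ : ι → W →ₗ[k] k} (he : ∀ l, e l ≠ 0) (heS : ∀ l, e l ∈ S)
    (hsum : ∀ y ∈ S, y = ∑ l, φ l y • e l)
    (hbound : ∀ y ∈ S, ∀ l, ‖φ l y‖ * ‖e l‖ ≤ β * ‖y‖) : IsClosed (S : Set W) := by
  refine IsSeqClosed.isClosed fun u y hu huy => ?_
  have hcauchy : ∀ l, CauchySeq fun n => φ l (u n) := by
    intro l
    have hl : 0 < ‖e l‖ := norm_pos_iff.2 (he l)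
    have hdist := cauchySeq_iff_tendsto_dist_atTop_0.1 huy.cauchySeq
    refine cauchySeq_iff_tendsto_dist_atTop_0.2
      (squeeze_zero (fun _ => dist_nonneg) (fun p => ?_)
        (by simpa using hdist.const_mul (β / ‖e l‖)))
    have := hbound _ (S.sub_mem (hu p.1) (hu p.2)) l
    rw [dist_eq_norm, dist_eq_norm, ← map_sub, div_mul_eq_mul_div, le_div_iff₀ hl]
    exact this
  choose c hc using fun l => cauchySeq_tendsto_of_complete (hcauchy l)
  have hlim : Filter.Tendsto u Filter.atTop (nhds (∑ l, c l • e l)) := by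
    rw [show u = fun n => ∑ l, φ l (u n) • e l from funext fun n => hsum _ (hu n)]
    exact tendsto_finsetSum _ fun l _ => (hc l).smul_const (e l)
  rw [tendsto_nhds_unique huy hlim]
  exact S.sum_mem fun l _ => S.smul_mem _ (heS l)

/-- Over a complete non-archimedean field, a finite-dimensional subspace has a `β`-cartesian
basis for every `β > 1`; it is given here with coordinate functionals defined on the whole
space. -/
theorem exists_cartesian_basis {k W : Type*} [NormedField k] [CompleteSpace k]
    [NormedAddCommGroup W] [NormedSpace k W] (hW : IsNonarchimedean (norm : W → ℝ))
    (s : Finset W) {β : ℝ} (hβ : 1 < β) :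
    ∃ (n : ℕ) (e : Fin n → W) (φ : Fin n → W →ₗ[k] k), (∀ l, e l ≠ 0) ∧
      (∀ l, e l ∈ Submodule.span k (s : Set W)) ∧
      (∀ y ∈ Submodule.span k (s : Set W), y = ∑ l, φ l y • e l) ∧
      ∀ y ∈ Submodule.span k (s : Set W), ∀ l, ‖φ l y‖ * ‖e l‖ ≤ β * ‖y‖ := by
  classical
  induction s using Finset.induction_on generalizing β with
  | empty =>
    refine ⟨0, Fin.elim0, Fin.elim0, fun l => l.elim0, fun l => l.elim0, fun y hy => ?_,
      fun y hy l => l.elim0⟩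
    simpa using hy
  | insert x s _ ih =>
    by_cases hx : x ∈ Submodule.span k (s : Set W)
    · rw [Finset.coe_insert, Submodule.span_insert_eq_span hx]
      exact ih hβ
    obtain ⟨γ, hγ, hγβ⟩ : ∃ γ : ℝ, 1 < γ ∧ γ * γ = β :=
      ⟨√β, by rwa [Real.lt_sqrt zero_le_one, one_pow], Real.mul_self_sqrt (by linarith)⟩
    obtain ⟨n, e, φ, he, heS, hsum, hbound⟩ := ih hγ
    rw [Finset.coe_insert]
    set S := Submodule.span k (s : Set W)
    have hclosed := Submodule.isClosed_of_coord_bound he heS hsum hbound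
    have hne : (S : Set W).Nonempty := ⟨0, S.zero_mem⟩
    have hd : 0 < Metric.infDist x S := (hclosed.notMem_iff_infDist_pos hne).1 hx
    obtain ⟨z, hz, hxz⟩ := (Metric.infDist_lt_iff hne).1
      (show Metric.infDist x S < γ * Metric.infDist x S by nlinarith)
    rw [dist_eq_norm] at hxz
    have hf : x - z ∉ S := fun h => hx (by simpa using S.add_mem h hz)
    obtain ⟨ψ', hψ', hψS'⟩ := Submodule.exists_le_ker_of_notMem hf
    obtain ⟨ψ, hψ, hψS⟩ : ∃ ψ : W →ₗ[k] k, ψ (x - z) = 1 ∧ ∀ y ∈ S, ψ y = 0 :=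
      ⟨(ψ' (x - z))⁻¹ • ψ', by simp only [LinearMap.smul_apply, smul_eq_mul, inv_mul_cancel₀ hψ'],
        fun y hy => by simp [LinearMap.mem_ker.1 (hψS' hy)]⟩
    generalize hfz : x - z = f at *
    have hle : S ≤ Submodule.span k (insert x (s : Set W)) :=
      Submodule.span_mono (Set.subset_insert _ _)
    have hdecomp : ∀ y ∈ Submodule.span k (insert x (s : Set W)), y - ψ y • f ∈ S := by
      intro y hy
      obtain ⟨a, t, ht, rfl⟩ := Submodule.mem_span_insert.1 hy
      have hxf : x = f + z := by rw [← hfz]; abel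
      have : a • x + t - ψ (a • x + t) • f = a • z + t := by
        rw [map_add, map_smul, hψS t ht, hxf, map_add, hψ, hψS z hz]
        simp only [smul_add, add_zero, smul_eq_mul, mul_one]
        abel
      rw [this]
      exact S.add_mem (S.smul_mem _ hz) ht
    have hψbound : ∀ y ∈ Submodule.span k (insert x (s : Set W)),
        ‖ψ y‖ * ‖f‖ ≤ γ * ‖y‖ := by
      intro y hy
      by_cases h0 : ψ y = 0
      · simp only [h0, norm_zero, zero_mul]; positivity
      have hmem : z - (ψ y)⁻¹ • (y - ψ y • f) ∈ S :=
        S.sub_mem hz (S.smul_mem _ (hdecomp y hy))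
      have h1 := Metric.infDist_le_dist_of_mem (x := x) hmem
      have h2 : x - (z - (ψ y)⁻¹ • (y - ψ y • f)) = (ψ y)⁻¹ • y := by
        rw [smul_sub, smul_smul, inv_mul_cancel₀ h0, one_smul, ← hfz]; abel
      rw [dist_eq_norm, h2, norm_smul, norm_inv, inv_mul_eq_div,
        le_div_iff₀ (norm_pos_iff.2 h0)] at h1
      nlinarith [norm_nonneg (ψ y)]
    refine ⟨n + 1, Fin.cons f e, Fin.cons ψ fun l => φ l - φ l f • ψ, ?_, ?_, ?_, ?_⟩
    · refine Fin.cases ?_ he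
      rintro (rfl : f = 0)
      exact hf S.zero_mem
    · refine Fin.cases ?_ fun l => hle (heS l)
      simp only [Fin.cons_zero]
      rw [← hfz]
      exact sub_mem (Submodule.subset_span (Set.mem_insert _ _)) (hle hz)
    · intro y hy
      have := hsum _ (hdecomp y hy)
      rw [sub_eq_iff_eq_add'] at this
      simpa [Fin.sum_univ_succ, mul_comm] using this
    · intro y hy
      refine Fin.cases ?_ fun l => ?_
      · simp only [Fin.cons_zero]
        exact (hψbound y hy).trans
          (mul_le_mul_of_nonneg_right (by nlinarith) (norm_nonneg y))
      · have h1 := hbound _ (hdecomp y hy) l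
        have h2 : ‖y - ψ y • f‖ ≤ γ * ‖y‖ := by
          rw [sub_eq_add_neg]
          refine (hW _ _).trans (max_le (by nlinarith [norm_nonneg y]) ?_)
          rw [norm_neg, norm_smul]
          exact hψbound y hy
        have h3 : (φ l - φ l f • ψ) y = φ l (y - ψ y • f) := by
          simp [mul_comm]
        simp only [Fin.cons_succ]
        rw [h3, ← hγβ, mul_assoc]
        exact h1.trans (mul_le_mul_of_nonneg_left h2 (by linarith))

open TensorProduct in
/-- If `∑ i, v i ⊗ w i = ∑ j, x j ⊗ y j` with `v` an `α`-cartesian family, then each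
`‖v i‖ * ‖w i‖` is at most `α` times any common bound of the `‖x j‖ * ‖y j‖`. -/
theorem norm_mul_norm_le_of_sum_tmul_eq {k V W ι κ : Type*} [NormedField k] [CompleteSpace k]
    [NormedAddCommGroup V] [NormedSpace k V] (hV : IsNonarchimedean (norm : V → ℝ))
    [NormedAddCommGroup W] [NormedSpace k W] (hW : IsNonarchimedean (norm : W → ℝ))
    [Fintype ι] [Fintype κ] {α M : ℝ} (hα : 0 ≤ α) (hM : 0 ≤ M) {v : ι → V} {w : ι → W}
    (hv : ∀ (c : ι → k) (i : ι), ‖c i‖ * ‖v i‖ ≤ α * ‖∑ i, c i • v i‖)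
    {x : κ → V} {y : κ → W} (hxy : ∀ j, ‖x j‖ * ‖y j‖ ≤ M)
    (h : ∑ i, v i ⊗ₜ[k] w i = ∑ j, x j ⊗ₜ[k] y j) (i : ι) :
    ‖v i‖ * ‖w i‖ ≤ α * M := by
  classical
  suffices hβ : ∀ β : ℝ, 1 < β → ‖v i‖ * ‖w i‖ ≤ β * (α * M) by
    refine ge_of_tendsto (x := nhdsWithin (1 : ℝ) (Set.Ioi 1)) (f := fun β => β * (α * M)) ?_
      (Filter.eventually_of_mem self_mem_nhdsWithin hβ)
    have : ContinuousAt (fun β : ℝ => β * (α * M)) 1 := by fun_prop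
    simpa using this.tendsto.mono_left nhdsWithin_le_nhds
  intro β hβ
  obtain ⟨n, e, φ, he, -, hsum, hbound⟩ := exists_cartesian_basis (k := k) hW
    (Finset.univ.image w ∪ Finset.univ.image y) hβ
  have hw : w i ∈ Submodule.span k
      ((Finset.univ.image w ∪ Finset.univ.image y : Finset W) : Set W) :=
    Submodule.subset_span (by simp)
  have hy : ∀ j, y j ∈ Submodule.span k
      ((Finset.univ.image w ∪ Finset.univ.image y : Finset W) : Set W) :=
    fun j => Submodule.subset_span (by simp)
  have hslice : ∀ l, ∑ i, φ l (w i) • v i = ∑ j, φ l (y j) • x j := fun l => by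
    simpa using congrArg ((TensorProduct.rid k V).toLinearMap ∘ₗ (φ l).lTensor V) h
  rcases (norm_nonneg (v i)).eq_or_lt with hvi | hvi
  · rw [← hvi, zero_mul]; positivity
  rw [← le_div_iff₀' hvi, hsum _ hw]
  refine hW.norm_sum_le_of_forall_le (by positivity) fun l _ => ?_
  have hel : 0 < ‖e l‖ := norm_pos_iff.2 (he l)
  have hx : ‖∑ j, φ l (y j) • x j‖ ≤ β * M / ‖e l‖ := by
    refine hV.norm_sum_le_of_forall_le (by positivity) fun j _ => ?_
    rw [le_div_iff₀ hel, norm_smul]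
    calc ‖φ l (y j)‖ * ‖x j‖ * ‖e l‖ = ‖φ l (y j)‖ * ‖e l‖ * ‖x j‖ := by ring
      _ ≤ β * ‖y j‖ * ‖x j‖ := mul_le_mul_of_nonneg_right (hbound _ (hy j) l) (norm_nonneg _)
      _ = β * (‖x j‖ * ‖y j‖) := by ring
      _ ≤ β * M := mul_le_mul_of_nonneg_left (hxy j) (by linarith)
  rw [le_div_iff₀ hel] at hx
  rw [le_div_iff₀' hvi, norm_smul]
  calc ‖v i‖ * (‖φ l (w i)‖ * ‖e l‖) = ‖φ l (w i)‖ * ‖v i‖ * ‖e l‖ := by ring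
    _ ≤ α * ‖∑ i, φ l (w i) • v i‖ * ‖e l‖ :=
      mul_le_mul_of_nonneg_right (hv (fun i => φ l (w i)) i) hel.le
    _ = α * (‖∑ j, φ l (y j) • x j‖ * ‖e l‖) := by rw [hslice, mul_assoc]
    _ ≤ α * (β * M) := mul_le_mul_of_nonneg_left hx hα
    _ = β * (α * M) := by ring

open TensorProduct in
/-- The tensor norm on `V ⊗[k] W`:
`‖t‖ = inf max_{1 ≤ i ≤ N} ‖v i‖ * ‖w i‖`, the infimum ranging over all representations
`t = ∑ i, v i ⊗ w i`. -/
noncomputable def tensorNorm {k V W : Type*} [NormedField k]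
    [NormedAddCommGroup V] [NormedSpace k V]
    [NormedAddCommGroup W] [NormedSpace k W]
    (t : V ⊗[k] W) : ℝ :=
  sInf { M : ℝ | ∃ (n : ℕ) (v : Fin n → V) (w : Fin n → W),
    t = ∑ i, v i ⊗ₜ[k] w i ∧ M = ⨆ i, ‖v i‖ * ‖w i‖ }

open TensorProduct in
/-- If `v 1, …, v n` is a linearly independent `α`-cartesian family of `V`, then for all
`w 1, …, w n ∈ W`, with `t = ∑ i, v i ⊗ w i`,
`α⁻¹ * max_i ‖v i‖ * ‖w i‖ ≤ ‖t‖_{V⊗W} ≤ max_i ‖v i‖ * ‖w i‖`. -/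
theorem tensorNorm_of_alpha_cartesian
    {k V W : Type*} [NormedField k] [CompleteSpace k]
    (hk : IsNonarchimedean (norm : k → ℝ))
    [NormedAddCommGroup V] [NormedSpace k V]
    (hV : IsNonarchimedean (norm : V → ℝ))
    [NormedAddCommGroup W] [NormedSpace k W]
    (hW : IsNonarchimedean (norm : W → ℝ))
    (α : ℝ) (hα : 1 < α) (n : ℕ) (v : Fin n → V)
    (hli : LinearIndependent k v)
    (hcart : ∀ c : Fin n → k,
      α⁻¹ * (⨆ i, ‖c i‖ * ‖v i‖) ≤ ‖∑ i, c i • v i‖ ∧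
      ‖∑ i, c i • v i‖ ≤ ⨆ i, ‖c i‖ * ‖v i‖)
    (w : Fin n → W) :
    α⁻¹ * (⨆ i, ‖v i‖ * ‖w i‖) ≤ tensorNorm (∑ i, v i ⊗ₜ[k] w i) ∧
    tensorNorm (∑ i, v i ⊗ₜ[k] w i) ≤ ⨆ i, ‖v i‖ * ‖w i‖ := by
  have hα0 : 0 < α := by linarith
  have hnonneg : ∀ (m : ℕ) (x : Fin m → V) (y : Fin m → W), 0 ≤ ⨆ j, ‖x j‖ * ‖y j‖ :=
    fun m x y => Real.iSup_nonneg fun j => by positivity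
  constructor
  · refine le_csInf ⟨_, n, v, w, rfl, rfl⟩ ?_
    rintro _ ⟨m, x, y, h, rfl⟩
    rw [inv_mul_le_iff₀ hα0]
    refine Real.iSup_le (fun i => ?_) (mul_nonneg hα0.le (hnonneg m x y))
    refine norm_mul_norm_le_of_sum_tmul_eq hV hW hα0.le (hnonneg m x y) (fun c i => ?_)
      (fun j => le_ciSup (f := fun j => ‖x j‖ * ‖y j‖) (Set.finite_range _).bddAbove j) h i
    exact (le_ciSup (f := fun i => ‖c i‖ * ‖v i‖) (Set.finite_range _).bddAbove i).trans
      ((inv_mul_le_iff₀ hα0).1 (hcart c).1)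
  · refine csInf_le ⟨0, ?_⟩ ⟨n, v, w, rfl, rfl⟩
    rintro _ ⟨m, x, y, -, rfl⟩
    exact hnonneg m x y
end

section
/- Let X be a topological space, Y a Hausdorff topological space, f : X → Y a continuous map, and W an open subset of X whose closure is compact. Let ∂W denote the topological boundary of W in X, set U = W \ f⁻¹(f(∂W)) and V = Y \ f(∂W). Then f maps U into V, and the restriction f|_U : U → V is topologically proper: for every compact subset K of V, the set f⁻¹(K) ∩ U is compact. -/
/-- Let `f : X → Y` be a continuous map with `Y` Hausdorff, and let `W` be an open subset
of `X` with compact closure.  Put `U = W \ f⁻¹(f(∂W))` and `V = Y \ f(∂W)` (i.e. the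
complement of `f(∂W)`).  Then `f` maps `U` into `V`, and the restriction `f|_U : U → V`
is topologically proper: for every compact `K ⊆ V` the set `f⁻¹(K) ∩ U` is compact. -/
theorem restriction_topologically_proper
    {X Y : Type*} [TopologicalSpace X] [TopologicalSpace Y] [T2Space Y]
    {f : X → Y} (hf : Continuous f) {W : Set X} (hW : IsOpen W)
    (hWc : IsCompact (closure W)) :
    Set.MapsTo f (W \ f ⁻¹' (f '' frontier W)) (f '' frontier W)ᶜ ∧
    ∀ K : Set Y, K ⊆ (f '' frontier W)ᶜ → IsCompact K →
      IsCompact (f ⁻¹' K ∩ (W \ f ⁻¹' (f '' frontier W))) := by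
  refine ⟨fun x hx => hx.2, fun K hKV hK => ?_⟩
  have hEq : f ⁻¹' K ∩ (W \ f ⁻¹' (f '' frontier W)) = closure W ∩ f ⁻¹' K := by
    ext x
    constructor
    · rintro ⟨hxK, hxW, -⟩
      exact ⟨subset_closure hxW, hxK⟩
    · rintro ⟨hxW, hxK⟩
      refine ⟨hxK, ?_, hKV hxK⟩
      by_contra hx
      exact hKV hxK ⟨x, hW.frontier_eq ▸ ⟨hxW, hx⟩, rfl⟩
  rw [hEq]
  exact hWc.inter_right (hK.isClosed.preimage hf)
end

section
/- Let k be a field complete with respect to a non-archimedean absolute value |·|. Let L and L' be field extensions of k, each equipped with a non-archimedean absolute value extending that of k. Let a ∈ L be algebraic over k with minimal polynomial P ∈ k[X], and let b ∈ L' be a root of P (i.e. P(b) = 0). Then |b| = |a|. In particular, if b ∈ L' satisfies |b| ≠ |a|, then P(b) ≠ 0. -/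
open IntermediateField in
/-- Over a complete, nontrivially valued non-archimedean field, the norm of an algebraic element of
a normed field extension is the spectral value of its minimal polynomial. -/
theorem NormedAlgebra.norm_eq_spectralValue_minpoly (k : Type*) {L : Type*}
    [NontriviallyNormedField k] [CompleteSpace k] [IsUltrametricDist k] [NormedField L]
    [NormedAlgebra k L] {a : L} (ha : IsAlgebraic k a) :
    ‖a‖ = spectralValue (minpoly k a) := by
  have : Algebra.IsAlgebraic k k⟮a⟯ := isAlgebraic_adjoin_simple ha.isIntegral
  rw [← minpoly_gen k a]
  exact NormedAlgebra.norm_eq_spectralNorm k (AdjoinSimple.gen k a)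

/-- If `k` is trivially valued, algebraic elements of a non-archimedean normed field extension have
norm at most one. -/
theorem IsAlgebraic.norm_le_one_of_trivial_norm {k L : Type*} [NormedField k] [NormedField L]
    [NormedAlgebra k L] (hL : IsNonarchimedean (norm : L → ℝ))
    (htriv : ∀ c : k, c ≠ 0 → ‖c‖ = 1) {a : L} (ha : IsAlgebraic k a) : ‖a‖ ≤ 1 := by
  have hmonic := minpoly.monic ha.isIntegral
  have hle : ‖a‖ ≤ spectralValue (minpoly k a) :=
    norm_root_le_spectralValue (f := (NormedAlgebra.toMulAlgebraNorm k L).toAlgebraNorm)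
      (MulRingNorm.isPowMul (NormedAlgebra.toMulAlgebraNorm k L).toMulRingNorm) hL hmonic
      (minpoly.aeval k a)
  refine hle.trans ((spectralValue_le_one_iff hmonic).2 fun n => ?_)
  by_cases hc : (minpoly k a).coeff n = 0
  · simp [hc]
  · exact (htriv _ hc).le

/-- If `k` is trivially valued, nonzero algebraic elements of a non-archimedean normed field
extension have norm one. -/
theorem IsAlgebraic.norm_eq_one_of_trivial_norm {k L : Type*} [NormedField k] [NormedField L]
    [NormedAlgebra k L] (hL : IsNonarchimedean (norm : L → ℝ))
    (htriv : ∀ c : k, c ≠ 0 → ‖c‖ = 1) {a : L} (ha : IsAlgebraic k a) (ha0 : a ≠ 0) :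
    ‖a‖ = 1 := by
  refine le_antisymm (ha.norm_le_one_of_trivial_norm hL htriv) ?_
  have hinv := ha.inv.norm_le_one_of_trivial_norm hL htriv
  rw [norm_inv] at hinv
  exact (inv_le_one₀ (norm_pos_iff.2 ha0)).1 hinv

/-- Algebraic elements of two non-archimedean normed extensions of a complete field have the same
norm if they have the same minimal polynomial. -/
theorem norm_eq_norm_of_minpoly_eq {k L L' : Type*} [NormedField k] [CompleteSpace k]
    [IsUltrametricDist k] [NormedField L] [NormedField L'] [NormedAlgebra k L] [NormedAlgebra k L']
    (hL : IsNonarchimedean (norm : L → ℝ)) (hL' : IsNonarchimedean (norm : L' → ℝ))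
    {a : L} {b : L'} (ha : IsAlgebraic k a) (hb : IsAlgebraic k b)
    (hab : minpoly k a = minpoly k b) : ‖a‖ = ‖b‖ := by
  by_cases htriv : ∀ c : k, c ≠ 0 → ‖c‖ = 1
  · have hzero : a = 0 ↔ b = 0 := by
      rw [← minpoly.coeff_zero_eq_zero ha.isIntegral, hab,
        minpoly.coeff_zero_eq_zero hb.isIntegral]
    by_cases ha0 : a = 0
    · rw [ha0, hzero.1 ha0, norm_zero, norm_zero]
    · rw [ha.norm_eq_one_of_trivial_norm hL htriv ha0,
        hb.norm_eq_one_of_trivial_norm hL' htriv (mt hzero.2 ha0)]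
  · push Not at htriv
    let _ : NontriviallyNormedField k := .ofNormNeOne htriv
    rw [NormedAlgebra.norm_eq_spectralValue_minpoly k ha, hab,
      ← NormedAlgebra.norm_eq_spectralValue_minpoly k hb]

/-- Let `k` be a field complete with respect to a non-archimedean absolute value and let
`L`, `L'` be field extensions of `k`, each equipped with a non-archimedean absolute value
extending that of `k`.  If `a ∈ L` is algebraic over `k` with minimal polynomial `P`,
then every root `b ∈ L'` of `P` satisfies `|b| = |a|`; in particular, if `|b| ≠ |a|` then
`P(b) ≠ 0`. -/
theorem abs_eq_of_root_minpoly
    {k L L' : Type*} [NormedField k] [CompleteSpace k]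
    [NormedField L] [NormedField L'] [Algebra k L] [Algebra k L']
    (hk : IsNonarchimedean (norm : k → ℝ))
    (hL : IsNonarchimedean (norm : L → ℝ))
    (hL' : IsNonarchimedean (norm : L' → ℝ))
    (hext : ∀ c : k, ‖algebraMap k L c‖ = ‖c‖)
    (hext' : ∀ c : k, ‖algebraMap k L' c‖ = ‖c‖)
    (a : L) (ha : IsAlgebraic k a) :
    (∀ b : L', Polynomial.aeval b (minpoly k a) = 0 → ‖b‖ = ‖a‖) ∧
    (∀ b : L', ‖b‖ ≠ ‖a‖ → Polynomial.aeval b (minpoly k a) ≠ 0) := by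
  have : IsUltrametricDist k := IsUltrametricDist.isUltrametricDist_of_isNonarchimedean_norm hk
  let _ : NormedAlgebra k L :=
    { ‹Algebra k L› with
      norm_smul_le := fun c x => by rw [Algebra.smul_def, norm_mul, hext] }
  let _ : NormedAlgebra k L' :=
    { ‹Algebra k L'› with
      norm_smul_le := fun c x => by rw [Algebra.smul_def, norm_mul, hext'] }
  have main : ∀ b : L', Polynomial.aeval b (minpoly k a) = 0 → ‖b‖ = ‖a‖ := fun b hb =>
    norm_eq_norm_of_minpoly_eq hL' hL ⟨_, minpoly.ne_zero ha.isIntegral, hb⟩ ha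
      (minpoly.eq_of_irreducible_of_monic (minpoly.irreducible ha.isIntegral) hb
        (minpoly.monic ha.isIntegral)).symm
  exact ⟨main, fun b hne hb => hne (main b hb)⟩
end

section
/- Let k be a field complete with respect to a non-archimedean absolute value. Let L and L' be field extensions of k, each equipped with a non-archimedean absolute value extending that of k. Let a ∈ L and a' ∈ L' be algebraic over k with |a| ≠ |a'|. Then there exists a polynomial g ∈ k[T] such that g(a) = 0 and g(a') = 1. -/
/-- If the absolute value of `k` is trivial, then an element algebraic over `k` of a
non-archimedean extension has absolute value at most `1`. -/
theorem norm_le_one_of_isAlgebraic_of_forall_norm_le_one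
    {k L : Type*} [NormedField k] [NormedField L] [NormedAlgebra k L]
    (hL : IsNonarchimedean (norm : L → ℝ)) (hk : ∀ c : k, ‖c‖ ≤ 1)
    {a : L} (ha : IsAlgebraic k a) : ‖a‖ ≤ 1 :=
  (norm_root_le_spectralValue (f := (NormedAlgebra.toMulAlgebraNorm k L).toAlgebraNorm)
    (MulRingNorm.isPowMul (NormedAlgebra.toMulAlgebraNorm k L).toMulRingNorm) hL
    (minpoly.monic ha.isIntegral) (minpoly.aeval k a)).trans
    ((spectralValue_le_one_iff (minpoly.monic ha.isIntegral)).2 fun _ ↦ hk _)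

/-- The absolute value of a nonzero algebraic element over a trivially valued field is `1`. -/
theorem norm_eq_one_of_isAlgebraic_of_forall_norm_le_one
    {k L : Type*} [NormedField k] [NormedField L] [NormedAlgebra k L]
    (hL : IsNonarchimedean (norm : L → ℝ)) (hk : ∀ c : k, ‖c‖ ≤ 1)
    {a : L} (ha : IsAlgebraic k a) (h0 : a ≠ 0) : ‖a‖ = 1 := by
  refine le_antisymm (norm_le_one_of_isAlgebraic_of_forall_norm_le_one hL hk ha) ?_
  have h := norm_le_one_of_isAlgebraic_of_forall_norm_le_one hL hk ha.inv
  rwa [norm_inv, inv_le_one₀ (norm_pos_iff.2 h0)] at h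

open IntermediateField in
/-- Over a complete nontrivially valued non-archimedean field, the absolute value of an algebraic
element is the spectral value of its minimal polynomial. -/
theorem norm_eq_spectralValue_minpoly_of_isAlgebraic
    {k L : Type*} [NontriviallyNormedField k] [CompleteSpace k] [IsUltrametricDist k]
    [NormedField L] [NormedAlgebra k L] {a : L} (ha : IsAlgebraic k a) :
    ‖a‖ = spectralValue (minpoly k a) := by
  have : Algebra.IsAlgebraic k k⟮a⟯ := isAlgebraic_adjoin_simple ha.isIntegral
  have h := spectralNorm_unique_field_norm_ext (K := k) (L := k⟮a⟯)
    (f := (NormedField.toAbsoluteValue L).comp (algebraMap k⟮a⟯ L).injective)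
    (fun c ↦ norm_algebraMap' L c) (AdjoinSimple.gen k a)
  rw [spectralNorm.eq_of_tower (L := L), AdjoinSimple.algebraMap_gen] at h
  exact h

/-- Over a complete non-archimedean field, the absolute value of an algebraic element depends only
on its minimal polynomial. -/
theorem norm_eq_of_minpoly_eq
    {k L L' : Type*} [NormedField k] [CompleteSpace k]
    [NormedField L] [NormedField L'] [NormedAlgebra k L] [NormedAlgebra k L']
    (hk : IsNonarchimedean (norm : k → ℝ))
    (hL : IsNonarchimedean (norm : L → ℝ))
    (hL' : IsNonarchimedean (norm : L' → ℝ))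
    {a : L} (ha : IsAlgebraic k a) {a' : L'} (ha' : IsAlgebraic k a')
    (h : minpoly k a = minpoly k a') : ‖a‖ = ‖a'‖ := by
  by_cases hnt : ∃ c : k, c ≠ 0 ∧ ‖c‖ ≠ 1
  · let : NontriviallyNormedField k := .ofNormNeOne hnt
    have : IsUltrametricDist k := IsUltrametricDist.isUltrametricDist_of_isNonarchimedean_norm hk
    rw [norm_eq_spectralValue_minpoly_of_isAlgebraic ha,
      norm_eq_spectralValue_minpoly_of_isAlgebraic ha', h]
  · push Not at hnt
    have hle (c : k) : ‖c‖ ≤ 1 := by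
      obtain rfl | hc := eq_or_ne c 0
      · simp
      · exact (hnt c hc).le
    have h0 : a = 0 ↔ a' = 0 := by
      rw [← minpoly.coeff_zero_eq_zero ha.isIntegral, h,
        minpoly.coeff_zero_eq_zero ha'.isIntegral]
    obtain rfl | hne := eq_or_ne a 0
    · simp [h0.1 rfl]
    · rw [norm_eq_one_of_isAlgebraic_of_forall_norm_le_one hL hle ha hne,
        norm_eq_one_of_isAlgebraic_of_forall_norm_le_one hL' hle ha' (mt h0.2 hne)]

/-- Algebraic elements with distinct minimal polynomials are separated by a polynomial. -/
theorem exists_aeval_eq_zero_and_aeval_eq_one_of_minpoly_ne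
    {k L L' : Type*} [Field k] [Field L] [Field L'] [Algebra k L] [Algebra k L']
    {a : L} (ha : IsAlgebraic k a) {a' : L'} (ha' : IsAlgebraic k a')
    (h : minpoly k a ≠ minpoly k a') :
    ∃ g : Polynomial k, Polynomial.aeval a g = 0 ∧ Polynomial.aeval a' g = 1 := by
  have hcop : IsCoprime (minpoly k a) (minpoly k a') := by
    refine (minpoly.irreducible ha.isIntegral).coprime_iff_not_dvd.2 fun hd ↦ h ?_
    exact Polynomial.eq_of_monic_of_associated (minpoly.monic ha.isIntegral)
      (minpoly.monic ha'.isIntegral) ((minpoly.irreducible ha.isIntegral).associated_of_dvd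
        (minpoly.irreducible ha'.isIntegral) hd)
  obtain ⟨u, v, huv⟩ := hcop
  refine ⟨u * minpoly k a, by simp, ?_⟩
  simpa using congrArg (Polynomial.aeval a') huv

/-- Let `k` be a field complete with respect to a non-archimedean absolute value and let
`L`, `L'` be field extensions of `k`, each equipped with a non-archimedean absolute value
extending that of `k`.  If `a ∈ L` and `a' ∈ L'` are algebraic over `k` and
`|a| ≠ |a'|`, then there is a polynomial `g ∈ k[T]` with `g(a) = 0` and `g(a') = 1`. -/
theorem exists_polynomial_separating
    {k L L' : Type*} [NormedField k] [CompleteSpace k]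
    [NormedField L] [NormedField L'] [Algebra k L] [Algebra k L']
    (hk : IsNonarchimedean (norm : k → ℝ))
    (hL : IsNonarchimedean (norm : L → ℝ))
    (hL' : IsNonarchimedean (norm : L' → ℝ))
    (hext : ∀ c : k, ‖algebraMap k L c‖ = ‖c‖)
    (hext' : ∀ c : k, ‖algebraMap k L' c‖ = ‖c‖)
    (a : L) (ha : IsAlgebraic k a) (a' : L') (ha' : IsAlgebraic k a')
    (hne : ‖a‖ ≠ ‖a'‖) :
    ∃ g : Polynomial k, Polynomial.aeval a g = 0 ∧ Polynomial.aeval a' g = 1 := by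
  let : NormedAlgebra k L :=
    { ‹Algebra k L› with norm_smul_le c x := by rw [Algebra.smul_def, norm_mul, hext] }
  let : NormedAlgebra k L' :=
    { ‹Algebra k L'› with norm_smul_le c x := by rw [Algebra.smul_def, norm_mul, hext'] }
  exact exists_aeval_eq_zero_and_aeval_eq_one_of_minpoly_ne ha ha' fun h ↦
    hne (norm_eq_of_minpoly_eq hk hL hL' ha ha' h)
end

section
/- Let k be a field complete with respect to a non-archimedean absolute value, and let (V_i)_{i∈ℕ} be a sequence of k-Banach spaces together with bounded (continuous) k-linear transition maps τ_i : V_{i+1} → V_i, each having dense image. Then for every sequence (t_i)_{i∈ℕ} with t_i ∈ V_i there exists a sequence (s_i)_{i∈ℕ} with s_i ∈ V_i such that t_i = s_i − τ_i(s_{i+1}) for all i ∈ ℕ. Equivalently, the map ∏_i V_i → ∏_i V_i sending (s_i)_i to (s_i − τ_i(s_{i+1}))_i is surjective. -/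
section Telescope

variable {k : Type*} [NormedField k] {V : ℕ → Type*} [∀ i, NormedAddCommGroup (V i)]
  [∀ i, NormedSpace k (V i)]

/-- The map `(s i)_i ↦ (s i - τ i (s (i + 1)))_i` on `∏ i, V i`. -/
noncomputable def telescopeMap (τ : ∀ i, V (i + 1) →L[k] V i) : (∀ i, V i) →L[k] ∀ i, V i :=
  ContinuousLinearMap.pi fun i =>
    ContinuousLinearMap.proj i - (τ i).comp (ContinuousLinearMap.proj (i + 1))

theorem telescopeMap_apply (τ : ∀ i, V (i + 1) →L[k] V i) (s : ∀ i, V i) (i : ℕ) :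
    telescopeMap τ s i = s i - τ i (s (i + 1)) := rfl

/-- The map sending `x : V n` to the family of its images in `V i` for `i ≤ n`, extended by zero
to the indices `i > n`. -/
noncomputable def transitionFamily (τ : ∀ i, V (i + 1) →L[k] V i) : ∀ n, V n →L[k] ∀ i, V i
  | 0 => ContinuousLinearMap.single k V 0
  | n + 1 => (transitionFamily τ n).comp (τ n) + ContinuousLinearMap.single k V (n + 1)

theorem telescopeMap_single_zero (τ : ∀ i, V (i + 1) →L[k] V i) (x : V 0) :
    telescopeMap τ (Pi.single 0 x) = Pi.single 0 x := by
  ext i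
  simp [telescopeMap_apply]

theorem telescopeMap_single_succ (τ : ∀ i, V (i + 1) →L[k] V i) (n : ℕ) (x : V (n + 1)) :
    telescopeMap τ (Pi.single (n + 1) x) = Pi.single (n + 1) x - Pi.single n (τ n x) := by
  ext i
  rw [telescopeMap_apply, Pi.sub_apply]
  congr 1
  by_cases h : i = n
  · subst h
    simp
  · rw [Pi.single_eq_of_ne h, Pi.single_eq_of_ne (by omega), map_zero]

theorem telescopeMap_transitionFamily (τ : ∀ i, V (i + 1) →L[k] V i) (n : ℕ) (x : V n) :
    telescopeMap τ (transitionFamily τ n x) = Pi.single n x := by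
  induction n with
  | zero => exact telescopeMap_single_zero τ x
  | succ n ih =>
    change telescopeMap τ (transitionFamily τ n (τ n x) + Pi.single (n + 1) x) = _
    rw [map_add, ih, telescopeMap_single_succ]
    abel

/-- A family whose entries have summably small images under the transition maps lies in the range
of the telescope map. -/
theorem exists_telescopeMap_eq_of_norm_le [∀ i, CompleteSpace (V i)]
    (τ : ∀ i, V (i + 1) →L[k] V i) (e : ∀ i, V i)
    (he : ∀ n, ∀ i ≤ n, ‖transitionFamily τ n (e n) i‖ ≤ (1 / 2 : ℝ) ^ n) :
    ∃ s, telescopeMap τ s = e := by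
  have hsum : Summable fun n => transitionFamily τ n (e n) := by
    refine Pi.summable.2 fun i => ?_
    refine Summable.of_norm_bounded_eventually_nat summable_geometric_two ?_
    filter_upwards [Filter.eventually_ge_atTop i] with n hn using he n i hn
  obtain ⟨s, hs⟩ := hsum
  refine ⟨s, ?_⟩
  have hmap := hs.mapL (telescopeMap τ)
  simp only [telescopeMap_transitionFamily] at hmap
  refine hmap.unique (Pi.hasSum.2 fun i => ?_)
  simpa using hasSum_single (f := fun n => (Pi.single n (e n) : ∀ i, V i) i) i
    fun n hn => Pi.single_eq_of_ne hn.symm _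

/-- When `τ n` has dense range, the error `x - τ n y` can be made small together with its images
under the transition maps. -/
theorem exists_norm_transitionFamily_sub_lt (τ : ∀ i, V (i + 1) →L[k] V i) (n : ℕ)
    (hdense : DenseRange (τ n)) (x : V n) {ε : ℝ} (hε : 0 < ε) :
    ∃ y, ∀ i ≤ n, ‖transitionFamily τ n (x - τ n y) i‖ < ε := by
  have hev : ∀ᶠ z in nhds x, ∀ i ∈ Set.Iic n, ‖transitionFamily τ n (x - z) i‖ < ε := by
    refine (Filter.eventually_all_finite (Set.finite_Iic n)).2 fun i _ => ?_
    have hcont : Continuous fun z => ‖transitionFamily τ n (x - z) i‖ :=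
      ((continuous_apply i).comp
        ((transitionFamily τ n).continuous.comp (continuous_const.sub continuous_id))).norm
    exact hcont.continuousAt.eventually_lt_const (by simpa using hε)
  obtain ⟨_, ⟨y, rfl⟩, hy⟩ := hdense.inter_nhds_nonempty hev
  exact ⟨y, hy⟩

end Telescope

/-- Let `k` be a field complete with respect to a non-archimedean absolute value and let
`(V i)_{i ∈ ℕ}` be `k`-Banach spaces (with non-archimedean norms) together with bounded
`k`-linear transition maps `τ i : V (i+1) → V i`, each with dense image.  Then for every
sequence `(t i)_{i ∈ ℕ}` with `t i ∈ V i` there is a sequence `(s i)_{i ∈ ℕ}` with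
`t i = s i - τ i (s (i+1))` for all `i`; that is, the map
`(s i)_i ↦ (s i - τ i (s (i+1)))_i` of `∏ i, V i` to itself is surjective. -/
theorem telescope_surjective_of_denseRange
    {k : Type*} [NormedField k] [CompleteSpace k]
    (hk : IsNonarchimedean (norm : k → ℝ))
    (V : ℕ → Type*) [∀ i, NormedAddCommGroup (V i)] [∀ i, NormedSpace k (V i)]
    [∀ i, CompleteSpace (V i)]
    (hna : ∀ i, IsNonarchimedean (norm : V i → ℝ))
    (τ : ∀ i, V (i + 1) →L[k] V i)
    (hdense : ∀ i, DenseRange (τ i)) :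
    ∀ t : ∀ i, V i, ∃ s : ∀ i, V i, ∀ i, t i = s i - τ i (s (i + 1)) := by
  intro t
  choose next hnext using fun n x =>
    exists_norm_transitionFamily_sub_lt τ n (hdense n) x (pow_pos (one_half_pos (α := ℝ)) n)
  let a : ∀ n, V n := fun n => Nat.rec 0 (fun n x => next n (x - t n)) n
  obtain ⟨s, hs⟩ := exists_telescopeMap_eq_of_norm_le τ (telescopeMap τ a - t) fun n i hi => by
    rw [Pi.sub_apply, telescopeMap_apply, sub_right_comm]
    exact (hnext n (a n - t n) i hi).le
  refine ⟨a - s, fun i => ?_⟩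
  rw [← telescopeMap_apply, map_sub, hs, sub_sub_cancel]
end
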